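/- For every α with 0 < α < 2 there exists a constant C_α > 0, depending only on α, such that the following holds. Let β ≥ 0, M > 0, 0 < δ ≤ M/4, and let Ω₀ ⊆ ℝ² be a bounded open set with |Ω₀| ≤ 100 M² that satisfies Ω₀ ∩ {x ∈ [−M,M]² : |x| > δ} = {x ∈ (0,∞)² : β x₂ < x₁} ∩ {x ∈ [−M,M]² : |x| > δ}. For a ∈ [2δ, M/2] define V(a) := lim_{ε→0⁺} ∫_{Ω₀ \ B̄((a,0),ε)} (a−y₁)/((a−y₁)² + y₂²)^{1+α/2} dy₁ dy₂. Then V is differentiable on [2δ, M/2] and |V′(a) + F(α,β)/(α a^{α})| ≤ C_α (1/M^{α} + δ²/a^{2+α}) for every a ∈ [2δ, M/2]. -/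

import Mathlib

open MeasureTheory Real Filter

/-- `F α β = β/(β²+1) − (α/(β²+1)^{1−α/2}) ∫_{−arctan β}^{π/2} cos^α θ dθ`. -/
noncomputable def F (α β : ℝ) : ℝ :=
  β / (β ^ 2 + 1) -
    α / (β ^ 2 + 1) ^ (1 - α / 2) * ∫ θ in (-Real.arctan β)..(Real.pi / 2), Real.cos θ ^ α

theorem K_bound {α : ℝ} (hα : 0 < α) {x t r : ℝ} (hr : 0 < r) (h : r ^ 2 ≤ x ^ 2 + t ^ 2) :
    |x / (x ^ 2 + t ^ 2) ^ (1 + α / 2)| ≤ r ^ (-(1 + α)) := by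
  set s := x ^ 2 + t ^ 2 with hs
  have hs0 : 0 < s := lt_of_lt_of_le (by positivity) h
  have hx : |x| ≤ s ^ (1 / 2 : ℝ) := by
    rw [← Real.sqrt_eq_rpow]
    exact Real.abs_le_sqrt (by rw [hs]; nlinarith [sq_nonneg t])
  rw [abs_div, abs_of_pos (rpow_pos_of_pos hs0 _), div_eq_mul_inv, ← rpow_neg hs0.le]
  calc |x| * s ^ (-(1 + α / 2)) ≤ s ^ (1 / 2 : ℝ) * s ^ (-(1 + α / 2)) := by gcongr
    _ = s ^ (-((1 + α) / 2)) := by rw [← rpow_add hs0]; congr 1; ring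
    _ ≤ (r ^ 2) ^ (-((1 + α) / 2)) :=
        rpow_le_rpow_of_nonpos (by positivity) h (by linarith)
    _ = r ^ (-(1 + α)) := by
        rw [← rpow_natCast, ← rpow_mul hr.le]; congr 1; push_cast; ring

theorem G_deriv {α : ℝ} (hα : 0 < α) {x t : ℝ} (h : 0 < x ^ 2 + t ^ 2) :
    HasDerivAt (fun x => -(1 / α) * (x ^ 2 + t ^ 2) ^ (-(α / 2)))
      (x / (x ^ 2 + t ^ 2) ^ (1 + α / 2)) x := by
  have h1 : HasDerivAt (fun x : ℝ => x ^ 2 + t ^ 2) (2 * x) x := by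
    simpa using (hasDerivAt_pow 2 x).add_const (t ^ 2)
  have h2 := (h1.rpow_const (p := -(α / 2)) (Or.inl h.ne')).const_mul (-(1 / α))
  refine h2.congr_deriv ?_
  rw [show -(α / 2) - 1 = -(1 + α / 2) by ring, rpow_neg h.le]
  have := rpow_pos_of_pos h (1 + α / 2)
  field_simp

theorem K_deriv {α : ℝ} {x t : ℝ} (h : 0 < x ^ 2 + t ^ 2) :
    HasDerivAt (fun x => x / (x ^ 2 + t ^ 2) ^ (1 + α / 2))
      ((x ^ 2 + t ^ 2) ^ (-(1 + α / 2)) -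
        (2 + α) * x ^ 2 * (x ^ 2 + t ^ 2) ^ (-(1 + α / 2) - 1)) x := by
  have h1 : HasDerivAt (fun x : ℝ => x ^ 2 + t ^ 2) (2 * x) x := by
    simpa using (hasDerivAt_pow 2 x).add_const (t ^ 2)
  have h2 := (hasDerivAt_id x).mul (h1.rpow_const (p := -(1 + α / 2)) (Or.inl h.ne'))
  have h3 : (fun x => x / (x ^ 2 + t ^ 2) ^ (1 + α / 2)) =
    (id * fun x : ℝ => (x ^ 2 + t ^ 2) ^ (-(1 + α / 2))) := by
    funext z
    simp only [Pi.mul_apply, id]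
    rw [rpow_neg (by positivity), div_eq_mul_inv]
  rw [h3]
  refine h2.congr_deriv ?_
  simp only [id]
  ring

theorem K_deriv_bound {α : ℝ} (hα : 0 < α) {x t r : ℝ} (hr : 0 < r) (h : r ^ 2 ≤ x ^ 2 + t ^ 2) :
    |(x ^ 2 + t ^ 2) ^ (-(1 + α / 2)) -
        (2 + α) * x ^ 2 * (x ^ 2 + t ^ 2) ^ (-(1 + α / 2) - 1)| ≤ (3 + α) * r ^ (-(2 + α)) := by
  set s := x ^ 2 + t ^ 2 with hs
  have hs0 : 0 < s := lt_of_lt_of_le (by positivity) h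
  have h1 : s ^ (-(1 + α / 2)) ≤ r ^ (-(2 + α)) := by
    calc s ^ (-(1 + α / 2)) ≤ (r ^ 2) ^ (-(1 + α / 2)) :=
        rpow_le_rpow_of_nonpos (by positivity) h (by linarith)
    _ = r ^ (-(2 + α)) := by
        rw [← rpow_natCast, ← rpow_mul hr.le]; congr 1; push_cast; ring
  have h2 : s ^ (-(1 + α / 2)) = s * s ^ (-(1 + α / 2) - 1) := by
    nth_rewrite 2 [← rpow_one s]
    rw [← rpow_add hs0]; congr 1; ring
  have hp : 0 < s ^ (-(1 + α / 2) - 1) := rpow_pos_of_pos hs0 _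
  have h3 : x ^ 2 * s ^ (-(1 + α / 2) - 1) ≤ s ^ (-(1 + α / 2)) := by
    rw [h2]; gcongr; rw [hs]; nlinarith [sq_nonneg t]
  have h4 : 0 ≤ x ^ 2 * s ^ (-(1 + α / 2) - 1) := by positivity
  have h5 : 0 < s ^ (-(1 + α / 2)) := rpow_pos_of_pos hs0 _
  rw [abs_le]
  constructor <;> nlinarith

theorem meas_k (α : ℝ) : Measurable (fun p : ℝ × (ℝ × ℝ) =>
    (p.1 - p.2.1) / ((p.1 - p.2.1) ^ 2 + p.2.2 ^ 2) ^ (1 + α / 2)) := by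
  fun_prop

theorem far {α : ℝ} (hα : 0 < α) {S : Set (ℝ × ℝ)} (hS : MeasurableSet S)
    (hfin : volume S ≠ ⊤) {a r : ℝ} (hr : 0 < r)
    (h : ∀ y ∈ S, r ^ 2 ≤ (a - y.1) ^ 2 + y.2 ^ 2) :
    ∃ D : ℝ, HasDerivAt (fun a => ∫ y in S, (a - y.1) / ((a - y.1) ^ 2 + y.2 ^ 2) ^ (1 + α / 2)) D a
      ∧ |D| ≤ (3 + α) * (r / 2) ^ (-(2 + α)) * volume.real S := by
  have hball : ∀ x ∈ Metric.ball a (r / 2), ∀ y ∈ S, (r / 2) ^ 2 ≤ (x - y.1) ^ 2 + y.2 ^ 2 := by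
    intro x hx y hy
    have h1 := h y hy
    rw [Metric.mem_ball, Real.dist_eq, abs_lt] at hx
    by_contra hcon
    push Not at hcon
    have h2 : |x - y.1| < r / 2 := by
      apply abs_lt_of_sq_lt_sq _ (by positivity); nlinarith [sq_nonneg y.2]
    have h2' := abs_lt.1 h2
    have : (a - y.1) ^ 2 = (a - x) ^ 2 + 2 * (a - x) * (x - y.1) + (x - y.1) ^ 2 := by ring
    have h6 : |(a - x) * (x - y.1)| ≤ (r / 2) * (r / 2) := by
      rw [abs_mul]
      gcongr
      rw [abs_le]; constructor <;> linarith [hx.1, hx.2]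
    have h7 := (abs_le.1 h6).2
    have h8 : (a - x) ^ 2 < (r / 2) ^ 2 := by
      apply sq_lt_sq' <;> linarith [hx.1, hx.2]
    nlinarith
  have : IsFiniteMeasure (volume.restrict S) := ⟨by simpa using hfin.lt_top⟩
  have hmk : ∀ x : ℝ, Measurable (fun y : ℝ × ℝ =>
      (x - y.1) / ((x - y.1) ^ 2 + y.2 ^ 2) ^ (1 + α / 2)) := fun x => by fun_prop
  have key := hasDerivAt_integral_of_dominated_loc_of_deriv_le
    (μ := volume.restrict S) (x₀ := a) (s := Metric.ball a (r / 2))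
    (F := fun a (y : ℝ × ℝ) => (a - y.1) / ((a - y.1) ^ 2 + y.2 ^ 2) ^ (1 + α / 2))
    (F' := fun a (y : ℝ × ℝ) => ((a - y.1) ^ 2 + y.2 ^ 2) ^ (-(1 + α / 2)) -
        (2 + α) * (a - y.1) ^ 2 * ((a - y.1) ^ 2 + y.2 ^ 2) ^ (-(1 + α / 2) - 1))
    (bound := fun _ => (3 + α) * (r / 2) ^ (-(2 + α)))
    (Metric.ball_mem_nhds a (by positivity))
    (Eventually.of_forall fun x => (hmk x).aestronglyMeasurable)
    (by
      refine Integrable.of_bound (hmk a).aestronglyMeasurable ((r / 2) ^ (-(1 + α))) ?_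
      filter_upwards [ae_restrict_mem hS] with y hy
      exact K_bound hα (by positivity) (hball a (Metric.mem_ball_self (by positivity)) y hy))
    (Measurable.aestronglyMeasurable (by fun_prop))
    (by
      filter_upwards [ae_restrict_mem hS] with y hy x hx
      exact K_deriv_bound hα (by positivity) (hball x hx y hy))
    (integrable_const _)
    (by
      filter_upwards [ae_restrict_mem hS] with y hy x hx
      have h0 : 0 < (x - y.1) ^ 2 + y.2 ^ 2 := lt_of_lt_of_le (by positivity) (hball x hx y hy)
      exact (K_deriv h0).comp_sub_const x y.1)
  refine ⟨_, key.2, ?_⟩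
  rw [← Real.norm_eq_abs]
  refine norm_setIntegral_le_of_norm_le_const hfin.lt_top ?_
  intro y hy
  exact K_deriv_bound hα (by positivity) (hball a (Metric.mem_ball_self (by positivity)) y hy)

theorem quad_pos {β a t : ℝ} (ha : 0 < a) : a ^ 2 / (1 + β ^ 2) ≤ (a - β * t) ^ 2 + t ^ 2 := by
  rw [div_le_iff₀ (by positivity)]
  nlinarith [sq_nonneg ((1 + β ^ 2) * t - a * β)]

theorem H_deriv {α β a : ℝ} (hα : 0 < α) (ha : 0 < a) (t : ℝ) :
    HasDerivAt (fun t => β / (α * (β ^ 2 + 1)) * ((a - β * t) ^ 2 + t ^ 2) ^ (-(α / 2)) +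
      a ^ (-α) * (β ^ 2 + 1) ^ (α / 2 - 1) *
        ∫ θ in (-Real.arctan β)..(Real.arctan (((1 + β ^ 2) * t - a * β) / a)), Real.cos θ ^ α)
      ((a - β * t) / ((a - β * t) ^ 2 + t ^ 2) ^ (1 + α / 2)) t := by
  have hb : 0 < β ^ 2 + 1 := by positivity
  have hq : 0 < (a - β * t) ^ 2 + t ^ 2 :=
    lt_of_lt_of_le (by positivity) (quad_pos (β := β) (t := t) ha)
  have h0 : HasDerivAt (fun t => a - β * t) (-β) t := by
    simpa using ((hasDerivAt_id t).const_mul β).const_sub a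
  have h1 : HasDerivAt (fun t => (a - β * t) ^ 2 + t ^ 2) (2 * (a - β * t) * (-β) + 2 * t) t := by
    exact ((h0.pow 2).add (hasDerivAt_pow 2 t)).congr_deriv (by simp)
  have h2 := (h1.rpow_const (p := -(α / 2)) (Or.inl hq.ne')).const_mul (β / (α * (β ^ 2 + 1)))
  have hu : HasDerivAt (fun t => ((1 + β ^ 2) * t - a * β) / a) ((1 + β ^ 2) / a) t := by
    simpa using (((hasDerivAt_id t).const_mul (1 + β ^ 2)).sub_const (a * β)).div_const a
  have h3 := hu.arctan
  have hc : Continuous (fun θ : ℝ => Real.cos θ ^ α) :=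
    Real.continuous_cos.rpow_const (fun _ => Or.inr hα.le)
  have h4 := (hc.integral_hasStrictDerivAt (-Real.arctan β)
    (Real.arctan (((1 + β ^ 2) * t - a * β) / a))).hasDerivAt.comp t h3
  refine (h2.add (h4.const_mul (a ^ (-α) * (β ^ 2 + 1) ^ (α / 2 - 1)))).congr_deriv ?_
  set u := ((1 + β ^ 2) * t - a * β) / a with hu'
  set q := (a - β * t) ^ 2 + t ^ 2 with hq'
  have hqu : q = a ^ 2 / (β ^ 2 + 1) * (1 + u ^ 2) := by
    rw [hq', hu']; field_simp; ring
  have hu1 : 0 < 1 + u ^ 2 := by positivity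
  have hcos : Real.cos (Real.arctan u) ^ α = (1 + u ^ 2) ^ (-(α / 2)) := by
    rw [Real.cos_arctan, Real.sqrt_eq_rpow, one_div, ← rpow_neg hu1.le, ← rpow_mul hu1.le]
    congr 1; ring
  have hA : a ^ (-α) = (a ^ 2) ^ (-(α / 2)) := by
    rw [← rpow_natCast, ← rpow_mul ha.le]; congr 1; push_cast; ring
  have hB : (β ^ 2 + 1) ^ (α / 2 - 1) = ((β ^ 2 + 1) ^ (-(α / 2)))⁻¹ * (β ^ 2 + 1)⁻¹ := by
    rw [← rpow_neg hb.le, ← rpow_neg_one (β ^ 2 + 1), ← rpow_add hb]; congr 1; ring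
  have hqp : a ^ (-α) * (β ^ 2 + 1) ^ (α / 2 - 1) * (1 + u ^ 2) ^ (-(α / 2)) =
      q ^ (-(α / 2)) * (β ^ 2 + 1)⁻¹ := by
    rw [hqu, mul_rpow (by positivity) hu1.le, div_rpow (by positivity) hb.le, hA, hB]
    ring
  have e1 : q ^ (-(α / 2) - 1) = q ^ (-(α / 2)) / q := by
    rw [rpow_sub hq, rpow_one]
  have e2 : q ^ (1 + α / 2) = q / q ^ (-(α / 2)) := by
    rw [rpow_add hq, rpow_one, rpow_neg hq.le]; simp
  have hqq := rpow_pos_of_pos hq (-(α / 2))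
  rw [hcos]
  have e3 : a ^ (-α) * (β ^ 2 + 1) ^ (α / 2 - 1) *
      ((1 + u ^ 2) ^ (-(α / 2)) * (1 / (1 + u ^ 2) * ((1 + β ^ 2) / a))) =
      q ^ (-(α / 2)) * (β ^ 2 + 1)⁻¹ * (1 / (1 + u ^ 2) * ((1 + β ^ 2) / a)) := by
    rw [← hqp]; ring
  have e4 : 1 / (1 + u ^ 2) = a ^ 2 / ((β ^ 2 + 1) * q) := by
    rw [hqu]; field_simp
  rw [e3, e4, e1, e2]
  generalize q ^ (-(α / 2)) = w at *
  clear_value q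
  field_simp
  ring

theorem H_tendsto {α β a : ℝ} (hα : 0 < α) (ha : 0 < a) :
    Tendsto (fun t => β / (α * (β ^ 2 + 1)) * ((a - β * t) ^ 2 + t ^ 2) ^ (-(α / 2)) +
      a ^ (-α) * (β ^ 2 + 1) ^ (α / 2 - 1) *
        ∫ θ in (-Real.arctan β)..(Real.arctan (((1 + β ^ 2) * t - a * β) / a)), Real.cos θ ^ α)
      atTop (nhds (β / (α * (β ^ 2 + 1)) * 0 + a ^ (-α) * (β ^ 2 + 1) ^ (α / 2 - 1) *
        ∫ θ in (-Real.arctan β)..(Real.pi / 2), Real.cos θ ^ α)) := by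
  have hc : Continuous (fun θ : ℝ => Real.cos θ ^ α) :=
    Real.continuous_cos.rpow_const (fun _ => Or.inr hα.le)
  refine Tendsto.add (Tendsto.const_mul _ ?_) (Tendsto.const_mul _ ?_)
  · refine (tendsto_rpow_neg_atTop (y := α / 2) (by positivity)).comp ?_
    refine tendsto_atTop_mono (f := fun t : ℝ => t ^ 2) (fun t => by nlinarith [sq_nonneg (a - β * t)]) ?_
    exact tendsto_pow_atTop (by norm_num)
  · have h1 : Continuous (fun x => ∫ θ in (-Real.arctan β)..x, Real.cos θ ^ α) :=
      intervalIntegral.continuous_primitive (fun _ _ => hc.intervalIntegrable _ _) _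
    refine (h1.tendsto _).comp ?_
    refine (Real.tendsto_arctan_atTop.mono_right nhdsWithin_le_nhds).comp ?_
    refine Tendsto.atTop_div_const ha ?_
    refine tendsto_atTop_add_const_right _ _ ?_
    exact tendsto_id.const_mul_atTop (by positivity)

theorem tail {α β a M γ : ℝ} (hα : 0 < α) (hM : 0 < M) (ha : 0 < a) (haM : a ≤ M / 2)
    (hγ : γ = max 1 β) :
    IntegrableOn (fun t => (a - β * t) / ((a - β * t) ^ 2 + t ^ 2) ^ (1 + α / 2)) (Set.Ioi (M / γ)) ∧
    |∫ t in Set.Ioi (M / γ), (a - β * t) / ((a - β * t) ^ 2 + t ^ 2) ^ (1 + α / 2)| ≤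
      2 ^ (1 + α) / α * M ^ (-α) := by
  have hγ1 : 1 ≤ γ := hγ ▸ le_max_left _ _
  have hT : 0 < M / γ := by positivity
  have hb : ∀ t ∈ Set.Ioi (M / γ), ‖(a - β * t) / ((a - β * t) ^ 2 + t ^ 2) ^ (1 + α / 2)‖ ≤
      (γ / 2) ^ (-(1 + α)) * t ^ (-(1 + α)) := by
    intro t ht
    have ht' : M < γ * t := by
      have := (div_lt_iff₀ (by positivity)).1 (Set.mem_Ioi.1 ht); linarith
    have ht0 : 0 < t := hT.trans ht
    rw [← mul_rpow (by positivity) ht0.le]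
    refine K_bound hα (by positivity) ?_
    rcases max_choice 1 β with h | h
    · rw [h] at hγ; subst hγ; nlinarith [sq_nonneg (a - β * t), sq_nonneg t]
    · rw [h] at hγ; subst hγ
      have : γ / 2 * t ≤ γ * t - a := by nlinarith
      nlinarith [sq_nonneg t, mul_self_le_mul_self (by positivity) this]
  have hi : IntegrableOn (fun t : ℝ => (γ / 2) ^ (-(1 + α)) * t ^ (-(1 + α))) (Set.Ioi (M / γ)) :=
    (integrableOn_Ioi_rpow_of_lt (by linarith) hT).const_mul _
  constructor
  · refine Integrable.mono' hi (Measurable.aestronglyMeasurable (by fun_prop)) ?_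
    filter_upwards [ae_restrict_mem measurableSet_Ioi] with t ht using hb t ht
  · rw [← Real.norm_eq_abs]
    refine (norm_integral_le_of_norm_le hi ?_).trans ?_
    · filter_upwards [ae_restrict_mem measurableSet_Ioi] with t ht using hb t ht
    · rw [integral_const_mul, integral_Ioi_rpow_of_lt (by linarith) hT]
      have e1 : -(1 + α) + 1 = -α := by ring
      rw [e1, neg_div_neg_eq, div_rpow hM.le (by positivity), div_rpow (by positivity) (by norm_num),
        rpow_neg (by norm_num : (0 : ℝ) ≤ 2), neg_add, rpow_add (by positivity : 0 < γ), rpow_neg_one]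
      have := rpow_pos_of_pos (by positivity : 0 < γ) (-α)
      have h2 := rpow_pos_of_pos (by norm_num : (0:ℝ) < 2) (1 + α)
      have h3 := rpow_pos_of_pos hM (-α)
      have : γ⁻¹ * γ ^ (-α) / (2 ^ (1 + α))⁻¹ * (M ^ (-α) / γ ^ (-α) / α) =
        γ⁻¹ * (2 ^ (1 + α) / α * M ^ (-α)) := by field_simp
      rw [this]
      have : γ⁻¹ ≤ 1 := inv_le_one_of_one_le₀ hγ1
      have h5 : 0 < 2 ^ (1 + α) / α * M ^ (-α) := by positivity
      nlinarith

theorem Ktrace_cont {α β a : ℝ} (ha : 0 < a) :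
    Continuous (fun t => (a - β * t) / ((a - β * t) ^ 2 + t ^ 2) ^ (1 + α / 2)) := by
  have hq : ∀ t, 0 < (a - β * t) ^ 2 + t ^ 2 := fun t =>
    lt_of_lt_of_le (by positivity) (quad_pos (β := β) (t := t) ha)
  refine Continuous.div (by fun_prop) ?_ (fun t => (rpow_pos_of_pos (hq t) _).ne')
  exact Continuous.rpow_const (by fun_prop) (fun t => Or.inl (hq t).ne')

theorem main_integral {α β a M γ : ℝ} (hα : 0 < α) (hM : 0 < M) (ha : 0 < a) (haM : a ≤ M / 2)
    (hγ : γ = max 1 β) :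
    |(∫ t in Set.Ioc 0 (M / γ), (a - β * t) / ((a - β * t) ^ 2 + t ^ 2) ^ (1 + α / 2))
      + F α β / (α * a ^ α)| ≤ 2 ^ (1 + α) / α * M ^ (-α) := by
  have hγ1 : 1 ≤ γ := hγ ▸ le_max_left _ _
  have hT : 0 < M / γ := by positivity
  obtain ⟨h1, h2⟩ := tail (α := α) (β := β) hα hM ha haM hγ
  have h3 : IntegrableOn (fun t => (a - β * t) / ((a - β * t) ^ 2 + t ^ 2) ^ (1 + α / 2))
      (Set.Ioc 0 (M / γ)) :=
    ((Ktrace_cont ha).integrableOn_Icc).mono_set Set.Ioc_subset_Icc_self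
  have h4 := setIntegral_union Set.Ioc_disjoint_Ioi_same measurableSet_Ioi h3 h1
  have h5 := h3.union h1
  rw [Set.Ioc_union_Ioi_eq_Ioi hT.le] at h4 h5
  have h6 := integral_Ioi_of_hasDerivAt_of_tendsto
    (H_deriv (α := α) (β := β) hα ha 0).continuousAt.continuousWithinAt
    (fun x _ => H_deriv hα ha x) h5 (H_tendsto hα ha)
  have e0 : Real.arctan (((1 + β ^ 2) * 0 - a * β) / a) = -Real.arctan β := by
    rw [← Real.arctan_neg]; congr 1; field_simp; ring
  rw [e0, intervalIntegral.integral_same] at h6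
  have hb : 0 < β ^ 2 + 1 := by positivity
  have e1 : ((a - β * 0) ^ 2 + (0:ℝ) ^ 2) ^ (-(α / 2)) = a ^ (-α) := by
    have : (a - β * 0) ^ 2 + (0:ℝ) ^ 2 = a ^ (2:ℝ) := by rw [rpow_two]; ring
    rw [this, ← rpow_mul ha.le]; congr 1; ring
  rw [e1] at h6
  have e2 : F α β / (α * a ^ α) =
      -∫ t in Set.Ioi 0, (a - β * t) / ((a - β * t) ^ 2 + t ^ 2) ^ (1 + α / 2) := by
    rw [h6, F, rpow_neg ha.le, show α / 2 - 1 = -(1 - α / 2) by ring, rpow_neg hb.le]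
    have := rpow_pos_of_pos ha α
    have := rpow_pos_of_pos hb (1 - α / 2)
    field_simp
    ring
  rw [e2, h4]
  rw [show ∀ x y : ℝ, x + -(x + y) = -y by intros; ring, abs_neg]
  exact h2

theorem sq_lower {β a x t : ℝ} (ha : 0 < a) (hx : x ∈ Metric.ball a (a / 2)) :
    (a / 2 / (1 + |β|)) ^ 2 ≤ (x - β * t) ^ 2 + t ^ 2 := by
  rw [Metric.mem_ball, Real.dist_eq, abs_lt] at hx
  have hx2 : a / 2 ≤ x := by linarith [hx.1]
  refine le_trans ?_ (quad_pos (β := β) (t := t) (by linarith))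
  rw [div_pow]
  gcongr
  nlinarith [abs_nonneg β, sq_abs β]

theorem VP_deriv {α β a M T : ℝ} (hα : 0 < α) (hM : 0 < M) (ha : 0 < a) (haM : a ≤ M / 2)
    (hT : 0 < T) (hTM : T ≤ M) :
    ∃ E : ℝ, HasDerivAt (fun a => ∫ t in Set.Ioc 0 T,
        (-(1 / α) * ((a - β * t) ^ 2 + t ^ 2) ^ (-(α / 2)) -
          -(1 / α) * ((a - M) ^ 2 + t ^ 2) ^ (-(α / 2))))
      ((∫ t in Set.Ioc 0 T, (a - β * t) / ((a - β * t) ^ 2 + t ^ 2) ^ (1 + α / 2)) - E) a ∧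
      |E| ≤ 2 ^ (1 + α) * M ^ (-α) := by
  set ρ := a / 2 / (1 + |β|) with hρ
  have hρ0 : 0 < ρ := by positivity
  have hb1 : ∀ x ∈ Metric.ball a (a / 2), ∀ t, ρ ^ 2 ≤ (x - β * t) ^ 2 + t ^ 2 :=
    fun x hx t => sq_lower ha hx
  have hb2 : ∀ x ∈ Metric.ball a (a / 2), ∀ t : ℝ, (M / 4) ^ 2 ≤ (x - M) ^ 2 + t ^ 2 := by
    intro x hx t
    rw [Metric.mem_ball, Real.dist_eq, abs_lt] at hx
    have : M / 4 ≤ M - x := by linarith [hx.2]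
    nlinarith [sq_nonneg t, mul_self_le_mul_self (by positivity) this]
  have hself : a ∈ Metric.ball a (a / 2) := Metric.mem_ball_self (by positivity)
  have hp1 : ∀ x ∈ Metric.ball a (a / 2), ∀ t, 0 < (x - β * t) ^ 2 + t ^ 2 :=
    fun x hx t => lt_of_lt_of_le (by positivity) (hb1 x hx t)
  have hp2 : ∀ x ∈ Metric.ball a (a / 2), ∀ t : ℝ, 0 < (x - M) ^ 2 + t ^ 2 :=
    fun x hx t => lt_of_lt_of_le (by positivity) (hb2 x hx t)
  have hcont : Continuous (fun t => -(1 / α) * ((a - β * t) ^ 2 + t ^ 2) ^ (-(α / 2)) -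
          -(1 / α) * ((a - M) ^ 2 + t ^ 2) ^ (-(α / 2))) := by
    refine Continuous.sub (continuous_const.mul ?_) (continuous_const.mul ?_)
    · exact Continuous.rpow_const (by fun_prop) (fun t => Or.inl (hp1 a hself t).ne')
    · exact Continuous.rpow_const (by fun_prop) (fun t => Or.inl (hp2 a hself t).ne')
  have hcK2 : Continuous (fun t => (a - M) / ((a - M) ^ 2 + t ^ 2) ^ (1 + α / 2)) := by
    refine Continuous.div (by fun_prop) ?_ (fun t => (rpow_pos_of_pos (hp2 a hself t) _).ne')
    exact Continuous.rpow_const (by fun_prop) (fun t => Or.inl (hp2 a hself t).ne')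
  have key := hasDerivAt_integral_of_dominated_loc_of_deriv_le
    (μ := volume.restrict (Set.Ioc 0 T)) (x₀ := a) (s := Metric.ball a (a / 2))
    (F := fun a t => (-(1 / α) * ((a - β * t) ^ 2 + t ^ 2) ^ (-(α / 2)) -
          -(1 / α) * ((a - M) ^ 2 + t ^ 2) ^ (-(α / 2))))
    (F' := fun a t => (a - β * t) / ((a - β * t) ^ 2 + t ^ 2) ^ (1 + α / 2) -
      (a - M) / ((a - M) ^ 2 + t ^ 2) ^ (1 + α / 2))
    (bound := fun _ => ρ ^ (-(1 + α)) + (M / 4) ^ (-(1 + α)))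
    (Metric.ball_mem_nhds a (by positivity))
    (Eventually.of_forall fun x => Measurable.aestronglyMeasurable (by fun_prop))
    (hcont.integrableOn_Icc.mono_set Set.Ioc_subset_Icc_self)
    (Measurable.aestronglyMeasurable (by fun_prop))
    (by
      refine Eventually.of_forall fun t x hx => ?_
      refine (norm_sub_le _ _).trans (add_le_add ?_ ?_)
      · exact K_bound hα hρ0 (hb1 x hx t)
      · exact K_bound hα (by positivity) (hb2 x hx t))
    (integrable_const _)
    (by
      refine Eventually.of_forall fun t x hx => ?_
      exact ((G_deriv hα (hp1 x hx t)).comp_sub_const x (β * t)).sub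
        ((G_deriv hα (hp2 x hx t)).comp_sub_const x M))
  refine ⟨∫ t in Set.Ioc 0 T, (a - M) / ((a - M) ^ 2 + t ^ 2) ^ (1 + α / 2), ?_, ?_⟩
  · refine key.2.congr_deriv ?_
    exact integral_sub ((Ktrace_cont ha).integrableOn_Icc.mono_set Set.Ioc_subset_Icc_self)
      (hcK2.integrableOn_Icc.mono_set Set.Ioc_subset_Icc_self)
  · rw [← Real.norm_eq_abs]
    refine (norm_setIntegral_le_of_norm_le_const (C := (M / 2) ^ (-(1 + α))) (by simp) ?_).trans ?_
    · intro t _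
      refine K_bound hα (by positivity) ?_
      nlinarith [sq_nonneg t]
    · have : volume.real (Set.Ioc 0 T) = T := by simp [Measure.real, hT.le]
      rw [this, div_rpow hM.le (by norm_num), rpow_neg (by norm_num : (0:ℝ) ≤ 2), neg_add,
        rpow_add hM, rpow_neg_one]
      have h2 := rpow_pos_of_pos (by norm_num : (0:ℝ) < 2) (1 + α)
      have h3 := rpow_pos_of_pos hM (-α)
      calc M⁻¹ * M ^ (-α) / (2 ^ (1 + α))⁻¹ * T ≤ M⁻¹ * M ^ (-α) / (2 ^ (1 + α))⁻¹ * M := by gcongr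
        _ = _ := by field_simp

/-- horizontal slice, full -/
theorem slice_full {α a t p q : ℝ} (hα : 0 < α) (ht : 0 < t) (hpq : p ≤ q) :
    ∫ x in Set.Ioc p q, (a - x) / ((a - x) ^ 2 + t ^ 2) ^ (1 + α / 2) =
      -(1 / α) * ((a - p) ^ 2 + t ^ 2) ^ (-(α / 2)) -
          -(1 / α) * ((a - q) ^ 2 + t ^ 2) ^ (-(α / 2)) := by
  rw [← intervalIntegral.integral_of_le hpq]
  have hp : ∀ x : ℝ, 0 < (a - x) ^ 2 + t ^ 2 := fun x => by positivity
  rw [intervalIntegral.integral_eq_sub_of_hasDerivAt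
    (f := fun x => -(-(1 / α) * ((a - x) ^ 2 + t ^ 2) ^ (-(α / 2))))]
  · ring
  · intro x _
    exact ((G_deriv hα (hp x)).comp_const_sub a x).neg.congr_deriv (by ring)
  · apply Continuous.intervalIntegrable
    refine Continuous.div (by fun_prop) ?_ (fun t => (rpow_pos_of_pos (hp t) _).ne')
    exact Continuous.rpow_const (by fun_prop) (fun t => Or.inl (hp t).ne')

theorem slice_int {α a t p q : ℝ} (ht : 0 < t) :
    IntegrableOn (fun x => (a - x) / ((a - x) ^ 2 + t ^ 2) ^ (1 + α / 2)) (Set.Ioc p q) := by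
  have hp : ∀ x : ℝ, 0 < (a - x) ^ 2 + t ^ 2 := fun x => by positivity
  refine Continuous.integrableOn_Ioc ?_
  refine Continuous.div (by fun_prop) ?_ (fun t => (rpow_pos_of_pos (hp t) _).ne')
  exact Continuous.rpow_const (by fun_prop) (fun t => Or.inl (hp t).ne')

theorem slice_diff {α a t p q ε : ℝ} (hα : 0 < α) (ht : 0 < t) (hpq : p ≤ q) (hε : 0 < ε)
    (h1 : t ≤ ε → p < a - ε) (h2 : a + ε < q) :
    ∫ x in Set.Ioc p q \ {x | (x - a) ^ 2 + t ^ 2 ≤ ε ^ 2},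
      (a - x) / ((a - x) ^ 2 + t ^ 2) ^ (1 + α / 2) =
      -(1 / α) * ((a - p) ^ 2 + t ^ 2) ^ (-(α / 2)) -
          -(1 / α) * ((a - q) ^ 2 + t ^ 2) ^ (-(α / 2)) := by
  by_cases hte : t ≤ ε
  · set ρ := √(ε ^ 2 - t ^ 2) with hρ
    have hnn : 0 ≤ ε ^ 2 - t ^ 2 := by nlinarith
    have hρ2 : ρ ^ 2 = ε ^ 2 - t ^ 2 := Real.sq_sqrt hnn
    have hρ0 : 0 ≤ ρ := Real.sqrt_nonneg _
    have hρε : ρ ≤ ε := by nlinarith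
    have hset : {x | (x - a) ^ 2 + t ^ 2 ≤ ε ^ 2} = Set.Icc (a - ρ) (a + ρ) := by
      ext x
      simp only [Set.mem_ofPred_eq, Set.mem_Icc]
      constructor
      · intro h
        have : |x - a| ≤ ρ := Real.abs_le_sqrt (by linarith)
        rw [abs_le] at this
        constructor <;> linarith [this.1, this.2]
      · rintro ⟨h3, h4⟩
        nlinarith
    have hsub : Set.Icc (a - ρ) (a + ρ) ⊆ Set.Ioc p q := by
      intro x hx
      have := h1 hte
      exact ⟨by linarith [hx.1], by linarith [hx.2]⟩
    rw [hset, setIntegral_sdiff measurableSet_Icc (slice_int ht) hsub, slice_full hα ht hpq,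
      integral_Icc_eq_integral_Ioc, slice_full hα ht (by linarith)]
    have : (a - (a - ρ)) ^ 2 = (a - (a + ρ)) ^ 2 := by ring
    rw [this]; ring
  · have hset : {x | (x - a) ^ 2 + t ^ 2 ≤ ε ^ 2} = ∅ := by
      ext x
      simp only [Set.mem_ofPred_eq, Set.mem_empty_iff_false, iff_false, not_le]
      nlinarith [sq_nonneg (x - a)]
    rw [hset, Set.sdiff_empty, slice_full hα ht hpq]

theorem VP_eq {α β a M γ ε : ℝ} (hα : 0 < α) (hβ : 0 ≤ β) (hM : 0 < M) 
    (hγ : γ = max 1 β) (hε : 0 < ε) (h1 : β * ε < a - ε) (h2 : a + ε < M) :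
    let P := {y : ℝ × ℝ | 0 < y.2 ∧ y.2 ≤ M ∧ β * y.2 < y.1 ∧ y.1 ≤ M}
    let B := {y : ℝ × ℝ | (y.1 - a) ^ 2 + y.2 ^ 2 ≤ ε ^ 2}
    IntegrableOn (fun y : ℝ × ℝ => (a - y.1) / ((a - y.1) ^ 2 + y.2 ^ 2) ^ (1 + α / 2)) (P \ B) ∧
    ∫ y in P \ B, (a - y.1) / ((a - y.1) ^ 2 + y.2 ^ 2) ^ (1 + α / 2) =
      ∫ t in Set.Ioc 0 (M / γ),
        (-(1 / α) * ((a - β * t) ^ 2 + t ^ 2) ^ (-(α / 2)) -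
          -(1 / α) * ((a - M) ^ 2 + t ^ 2) ^ (-(α / 2))) := by
  intro P B
  have hγ1 : 1 ≤ γ := hγ ▸ le_max_left _ _
  have hγβ : β ≤ γ := hγ ▸ le_max_right _ _
  have hPm : MeasurableSet P := by
    refine MeasurableSet.inter ?_ (MeasurableSet.inter ?_ (MeasurableSet.inter ?_ ?_))
    · exact measurableSet_lt measurable_const measurable_snd
    · exact measurableSet_le measurable_snd measurable_const
    · exact measurableSet_lt (by fun_prop) measurable_fst
    · exact measurableSet_le measurable_fst measurable_const
  have hBm : MeasurableSet B := measurableSet_le (by fun_prop) measurable_const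
  have hPB := hPm.diff hBm
  have hsub : P \ B ⊆ Set.Icc 0 M ×ˢ Set.Icc 0 M := by
    rintro ⟨x, y⟩ ⟨⟨k1, k2, k3, k4⟩, -⟩
    simp only at k1 k2 k3 k4
    have : 0 ≤ β * y := by positivity
    exact ⟨⟨by simp only; linarith, k4⟩, ⟨k1.le, k2⟩⟩
  have hfin : volume (P \ B) ≠ ⊤ :=
    ((measure_mono hsub).trans_lt ((isCompact_Icc.prod isCompact_Icc).measure_lt_top)).ne
  have hint : IntegrableOn (fun y : ℝ × ℝ => (a - y.1) / ((a - y.1) ^ 2 + y.2 ^ 2) ^ (1 + α / 2))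
      (P \ B) := by
    refine Measure.integrableOn_of_bounded hfin (Measurable.aestronglyMeasurable (by fun_prop))
      (M := ε ^ (-(1 + α))) ?_
    filter_upwards [ae_restrict_mem hPB] with y hy
    refine K_bound hα hε ?_
    have := hy.2
    simp only [B, Set.mem_ofPred_eq, not_le] at this
    nlinarith
  refine ⟨hint, ?_⟩
  rw [← integral_indicator hPB, Measure.volume_eq_prod, integral_prod_symm]
  swap
  · rw [← Measure.volume_eq_prod]; exact hint.integrable_indicator hPB
  rw [← integral_indicator measurableSet_Ioc]
  congr 1
  funext t
  by_cases ht : t ∈ Set.Ioc 0 (M / γ)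
  · rw [Set.indicator_of_mem ht]
    have htM : γ * t ≤ M := by
      have := (le_div_iff₀ (by positivity)).1 ht.2; linarith
    have ht0 := ht.1
    have hβt : β * t ≤ M := by nlinarith
    have htM' : t ≤ M := by nlinarith
    rw [← slice_diff (p := β * t) (q := M) (ε := ε) hα ht.1 hβt hε (fun h => by nlinarith) h2,
      ← integral_indicator]
    · congr 1
      funext x
      by_cases hx : (x, t) ∈ P \ B
      · rw [Set.indicator_of_mem hx, Set.indicator_of_mem]
        exact ⟨⟨hx.1.2.2.1, hx.1.2.2.2⟩, hx.2⟩
      · rw [Set.indicator_of_notMem hx, Set.indicator_of_notMem]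
        intro hx'
        exact hx ⟨⟨ht0, htM', hx'.1.1, hx'.1.2⟩, hx'.2⟩
    · exact measurableSet_Ioc.diff (measurableSet_le (by fun_prop) measurable_const)
  · rw [Set.indicator_of_notMem ht]
    have : ∀ x : ℝ, (x, t) ∉ P \ B := by
      rintro x ⟨⟨k1, k2, k3, k4⟩, -⟩
      simp only at k1 k2 k3 k4
      apply ht
      refine ⟨k1, ?_⟩
      rw [le_div_iff₀ (by positivity)]
      rcases max_choice 1 β with h | h <;> rw [hγ, h] <;> linarith
    simp [this]

theorem far_int {α : ℝ} (hα : 0 < α) {S : Set (ℝ × ℝ)} (hS : MeasurableSet S)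
    (hfin : volume S ≠ ⊤) {a r : ℝ} (hr : 0 < r)
    (h : ∀ y ∈ S, r ^ 2 ≤ (a - y.1) ^ 2 + y.2 ^ 2) :
    IntegrableOn (fun y : ℝ × ℝ => (a - y.1) / ((a - y.1) ^ 2 + y.2 ^ 2) ^ (1 + α / 2)) S := by
  refine Measure.integrableOn_of_bounded hfin (Measurable.aestronglyMeasurable (by fun_prop))
    (M := r ^ (-(1 + α))) ?_
  filter_upwards [ae_restrict_mem hS] with y hy
  exact K_bound hα hr (h y hy)

theorem disc_vol {δ : ℝ} (hδ : 0 < δ) {S : Set (ℝ × ℝ)}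
    (h : S ⊆ {y : ℝ × ℝ | y.1 ^ 2 + y.2 ^ 2 ≤ δ ^ 2}) :
    volume S ≠ ⊤ ∧ volume.real S ≤ 4 * δ ^ 2 := by
  have hsub : S ⊆ Set.Icc (-δ) δ ×ˢ Set.Icc (-δ) δ := by
    intro y hy
    have h1 : y.1 ^ 2 + y.2 ^ 2 ≤ δ ^ 2 := h hy
    have h2 := abs_le.1 (abs_le_of_sq_le_sq (by nlinarith [sq_nonneg y.2] : y.1 ^ 2 ≤ δ ^ 2) hδ.le)
    have h3 := abs_le.1 (abs_le_of_sq_le_sq (by nlinarith [sq_nonneg y.1] : y.2 ^ 2 ≤ δ ^ 2) hδ.le)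
    exact ⟨h2, h3⟩
  have hv : volume (Set.Icc (-δ) δ ×ˢ Set.Icc (-δ) δ : Set (ℝ × ℝ)) = ENNReal.ofReal (4 * δ ^ 2) := by
    rw [Measure.volume_eq_prod, Measure.prod_prod, Real.volume_Icc,
      ← ENNReal.ofReal_mul (by linarith)]
    congr 1; ring
  have hle := (measure_mono (μ := volume) hsub).trans_eq hv
  exact ⟨(hle.trans_lt ENNReal.ofReal_lt_top).ne, ENNReal.toReal_le_of_le_ofReal (by positivity) hle⟩

theorem far_const {α r : ℝ} (hr : 0 < r) :
    (r / 2 / 2) ^ (-(2 + α)) = 4 ^ (2 + α) * r ^ (-(2 + α)) := by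
  rw [show r / 2 / 2 = r / 4 by ring, div_rpow hr.le (by norm_num),
    rpow_neg (by norm_num : (0:ℝ) ≤ 4), div_inv_eq_mul, mul_comm]

theorem final_arith {K L N X Y I Z D1 D2 D3 E : ℝ} (hK : 0 < K) (hL : 0 < L) (hN : 0 < N)
    (hX : 0 < X) (hY : 0 < Y)
    (g1 : |D1| ≤ 4 * K * X) (g2 : |D2| ≤ 4 * K * X) (g3 : |D3| ≤ 100 * K * Y)
    (gE : |E| ≤ N * Y) (hm : |I + Z| ≤ L * Y) :
    |D1 + D3 + (I - E - D2) + Z| ≤ (100 * K + (L + N)) * (Y + X) := by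
  rw [abs_le] at *
  have t1 : 0 < K * X := by positivity
  have t2 : 0 < L * X := by positivity
  have t3 : 0 < N * X := by positivity
  constructor <;> nlinarith [hm.1, hm.2, g1.1, g1.2, g2.1, g2.2, g3.1, g3.2, gE.1, gE.2]

set_option maxHeartbeats 1000000 in
theorem stmt16 (α : ℝ) (hα0 : 0 < α) (hα2 : α < 2) :
    ∃ C : ℝ, 0 < C ∧ ∀ (β M δ : ℝ) (Ω₀ : Set (ℝ × ℝ)),
      0 ≤ β → 0 < M → 0 < δ → δ ≤ M / 4 →
      IsOpen Ω₀ → Bornology.IsBounded Ω₀ →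
      volume Ω₀ ≤ ENNReal.ofReal (100 * M ^ 2) →
      Ω₀ ∩ {x : ℝ × ℝ | x.1 ∈ Set.Icc (-M) M ∧ x.2 ∈ Set.Icc (-M) M ∧
          δ ^ 2 < x.1 ^ 2 + x.2 ^ 2} =
        {x : ℝ × ℝ | 0 < x.1 ∧ 0 < x.2 ∧ β * x.2 < x.1} ∩
          {x : ℝ × ℝ | x.1 ∈ Set.Icc (-M) M ∧ x.2 ∈ Set.Icc (-M) M ∧
            δ ^ 2 < x.1 ^ 2 + x.2 ^ 2} →
      ∃ V V' : ℝ → ℝ,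
        (∀ a ∈ Set.Icc (2 * δ) (M / 2),
          Filter.Tendsto
            (fun ε : ℝ => ∫ y in Ω₀ \ {y : ℝ × ℝ | (y.1 - a) ^ 2 + y.2 ^ 2 ≤ ε ^ 2},
              (a - y.1) / ((a - y.1) ^ 2 + y.2 ^ 2) ^ (1 + α / 2))
            (nhdsWithin 0 (Set.Ioi 0)) (nhds (V a))) ∧
        ∀ a ∈ Set.Icc (2 * δ) (M / 2),
          HasDerivWithinAt V (V' a) (Set.Icc (2 * δ) (M / 2)) a ∧
          |V' a + F α β / (α * a ^ α)| ≤
            C * (1 / M ^ α + δ ^ 2 / a ^ (2 + α)) := by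
  have c4 : (0:ℝ) < 4 ^ (2 + α) := rpow_pos_of_pos (by norm_num) _
  have c2 : (0:ℝ) < 2 ^ (1 + α) := rpow_pos_of_pos (by norm_num) _
  refine ⟨100 * ((3 + α) * 4 ^ (2 + α)) + (2 ^ (1 + α) / α + 2 ^ (1 + α)), by positivity, ?_⟩
  intro β M δ Ω hβ hM hδ hδM hopen _ hvol hΩ
  have hΩ' : ∀ x y : ℝ, -M ≤ x → x ≤ M → -M ≤ y → y ≤ M → δ ^ 2 < x ^ 2 + y ^ 2 →
      ((x, y) ∈ Ω ↔ (0 < y ∧ β * y < x)) := by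
    intro x y k1 k2 k3 k4 k5
    have := Set.ext_iff.1 hΩ (x, y)
    simp only [Set.mem_inter_iff, Set.mem_ofPred_eq, Set.mem_Icc, k1, k2, k3, k4, k5, and_true,
      true_and] at this
    rw [this]
    constructor
    · rintro ⟨-, h1, h2⟩; exact ⟨h1, h2⟩
    · rintro ⟨h1, h2⟩
      have : 0 ≤ β * y := by positivity
      exact ⟨by linarith, h1, h2⟩
  set Dδ : Set (ℝ × ℝ) := {y : ℝ × ℝ | y.1 ^ 2 + y.2 ^ 2 ≤ δ ^ 2} with hD
  set Q : Set (ℝ × ℝ) := Set.Icc (-M) M ×ˢ Set.Icc (-M) M with hQ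
  set P : Set (ℝ × ℝ) := {y : ℝ × ℝ | 0 < y.2 ∧ y.2 ≤ M ∧ β * y.2 < y.1 ∧ y.1 ≤ M} with hP
  have hDm : MeasurableSet Dδ := measurableSet_le (by fun_prop) measurable_const
  have hQm : MeasurableSet Q := measurableSet_Icc.prod measurableSet_Icc
  have hPm : MeasurableSet P := by
    refine MeasurableSet.inter ?_ (MeasurableSet.inter ?_ (MeasurableSet.inter ?_ ?_))
    · exact measurableSet_lt measurable_const measurable_snd
    · exact measurableSet_le measurable_snd measurable_const
    · exact measurableSet_lt (by fun_prop) measurable_fst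
    · exact measurableSet_le measurable_fst measurable_const
  have hm1 : MeasurableSet (Ω ∩ Dδ) := hopen.measurableSet.inter hDm
  have hm2 : MeasurableSet (P ∩ Dδ) := hPm.inter hDm
  have hm3 : MeasurableSet (Ω \ Q) := hopen.measurableSet.diff hQm
  obtain ⟨hf1, hv1⟩ := disc_vol hδ (Set.inter_subset_right : Ω ∩ Dδ ⊆ Dδ)
  obtain ⟨hf2, hv2⟩ := disc_vol hδ (Set.inter_subset_right : P ∩ Dδ ⊆ Dδ)
  have hv3' : volume (Ω \ Q) ≤ ENNReal.ofReal (100 * M ^ 2) :=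
    (measure_mono Set.sdiff_subset).trans hvol
  have hf3 : volume (Ω \ Q) ≠ ⊤ := (hv3'.trans_lt ENNReal.ofReal_lt_top).ne
  have hv3 : volume.real (Ω \ Q) ≤ 100 * M ^ 2 :=
    ENNReal.toReal_le_of_le_ofReal (by positivity) hv3'
  have hnearD : ∀ a ∈ Set.Icc (2 * δ) (M / 2), ∀ y ∈ Dδ,
      (a / 2) ^ 2 ≤ (a - y.1) ^ 2 + y.2 ^ 2 := by
    rintro a ⟨ha1, ha2⟩ y hy
    have hy' : y.1 ^ 2 + y.2 ^ 2 ≤ δ ^ 2 := hy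
    have h2 := abs_le.1 (abs_le_of_sq_le_sq (by nlinarith [sq_nonneg y.2] : y.1 ^ 2 ≤ δ ^ 2) hδ.le)
    have : a / 2 ≤ a - y.1 := by linarith [h2.2]
    nlinarith [sq_nonneg y.2, mul_self_le_mul_self (by linarith) this]
  have hfarQ : ∀ a ∈ Set.Icc (2 * δ) (M / 2), ∀ y, y ∉ Q →
      (M / 2) ^ 2 ≤ (a - y.1) ^ 2 + y.2 ^ 2 := by
    rintro a ⟨ha1, ha2⟩ y hy
    by_contra hcon
    push Not at hcon
    apply hy
    have h2 := abs_lt.1 (abs_lt_of_sq_lt_sq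
      (by nlinarith [sq_nonneg y.2] : (a - y.1) ^ 2 < (M / 2) ^ 2) (by positivity))
    have h3 := abs_lt.1 (abs_lt_of_sq_lt_sq
      (by nlinarith [sq_nonneg (a - y.1)] : y.2 ^ 2 < (M / 2) ^ 2) (by positivity))
    exact ⟨⟨by linarith [h2.2], by linarith [h2.1]⟩, ⟨by linarith [h3.1], by linarith [h3.2]⟩⟩
  have hγ1 : (1:ℝ) ≤ max 1 β := le_max_left _ _
  have hT : 0 < M / max 1 β := by positivity
  have hTM : M / max 1 β ≤ M := div_le_self hM.le hγ1
  let V : ℝ → ℝ := fun a =>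
    (∫ y in Ω ∩ Dδ, (a - y.1) / ((a - y.1) ^ 2 + y.2 ^ 2) ^ (1 + α / 2)) +
    (∫ y in Ω \ Q, (a - y.1) / ((a - y.1) ^ 2 + y.2 ^ 2) ^ (1 + α / 2)) +
    ((∫ t in Set.Ioc 0 (M / max 1 β),
        (-(1 / α) * ((a - β * t) ^ 2 + t ^ 2) ^ (-(α / 2)) -
          -(1 / α) * ((a - M) ^ 2 + t ^ 2) ^ (-(α / 2)))) -
    ∫ y in P ∩ Dδ, (a - y.1) / ((a - y.1) ^ 2 + y.2 ^ 2) ^ (1 + α / 2))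
  refine ⟨V, deriv V, ?_, ?_⟩
  · rintro a haI
    have ⟨ha1, ha2⟩ := haI
    have ha : 0 < a := by linarith
    refine tendsto_const_nhds.congr' ?_
    have hε0 : 0 < min (a / 2 / (1 + β)) (M / 2) := by positivity
    filter_upwards [Ioo_mem_nhdsGT hε0] with ε hε
    have hε1 : 0 < ε := hε.1
    have hε2 : ε * (1 + β) < a / 2 :=
      (lt_div_iff₀ (by positivity)).1 (hε.2.trans_le (min_le_left _ _))
    have hε3 : ε < M / 2 := hε.2.trans_le (min_le_right _ _)
    have hε4 : ε < a / 2 := by nlinarith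
    obtain ⟨hiP, heP⟩ := VP_eq (α := α) (β := β) (a := a) (M := M) hα0 hβ hM rfl hε1
      (by nlinarith) (by linarith)
    set B : Set (ℝ × ℝ) := {y : ℝ × ℝ | (y.1 - a) ^ 2 + y.2 ^ 2 ≤ ε ^ 2} with hB
    rw [← hP] at hiP heP
    have hBm : MeasurableSet B := measurableSet_le (by fun_prop) measurable_const
    have hBD : ∀ y ∈ B, y ∉ Dδ := by
      intro y hy hyD
      have := hnearD a haI y hyD
      have hy' : (y.1 - a) ^ 2 + y.2 ^ 2 ≤ ε ^ 2 := hy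
      nlinarith
    have hBQ : ∀ y ∈ B, y ∈ Q := by
      intro y hy
      by_contra hyQ
      have := hfarQ a haI y hyQ
      have hy' : (y.1 - a) ^ 2 + y.2 ^ 2 ≤ ε ^ 2 := hy
      nlinarith
    have hDQ : Dδ ⊆ Q := by
      intro y hy
      have hy' : y.1 ^ 2 + y.2 ^ 2 ≤ δ ^ 2 := hy
      have h2 := abs_le.1 (abs_le_of_sq_le_sq (by nlinarith [sq_nonneg y.2] : y.1 ^ 2 ≤ δ ^ 2) hδ.le)
      have h3 := abs_le.1 (abs_le_of_sq_le_sq (by nlinarith [sq_nonneg y.1] : y.2 ^ 2 ≤ δ ^ 2) hδ.le)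
      exact ⟨⟨by linarith [h2.1], by linarith [h2.2]⟩, ⟨by linarith [h3.1], by linarith [h3.2]⟩⟩
    have hPQ : P ⊆ Q := by
      rintro y ⟨k1, k2, k3, k4⟩
      have : 0 ≤ β * y.2 := by positivity
      exact ⟨⟨by linarith, k4⟩, ⟨by linarith, k2⟩⟩
    have hΩP : ∀ y ∈ Q, y ∉ Dδ → (y ∈ Ω ↔ y ∈ P) := by
      rintro ⟨x, y⟩ ⟨⟨k1, k2⟩, ⟨k3, k4⟩⟩ hyD
      have k5 : δ ^ 2 < x ^ 2 + y ^ 2 := not_le.1 hyD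
      rw [hΩ' x y k1 k2 k3 k4 k5]
      constructor
      · rintro ⟨h1, h2⟩; exact ⟨h1, k4, h2, k2⟩
      · rintro ⟨h1, _, h2, _⟩; exact ⟨h1, h2⟩
    have hdecomp : Ω \ B = ((Ω ∩ Dδ) ∪ (Ω \ Q)) ∪ ((P \ B) \ (P ∩ Dδ)) := by
      ext y
      have q1 := hBD y
      have q2 := hBQ y
      have q3 := @hDQ y
      have q4 := @hPQ y
      have q5 := hΩP y
      simp only [Set.mem_union, Set.mem_inter_iff, Set.mem_sdiff]
      tauto
    have hi1 := far_int hα0 hm1 hf1 (a := a) (by positivity) (fun y hy => hnearD a haI y hy.2)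
    have hi3 := far_int hα0 hm3 hf3 (a := a) (by positivity) (fun y hy => hfarQ a haI y hy.2)
    rw [hdecomp, setIntegral_union _ ((hPm.diff hBm).diff hm2) (hi1.union hi3)
      (hiP.mono_set Set.sdiff_subset), setIntegral_union _ hm3 hi1 hi3,
      setIntegral_sdiff hm2 hiP, heP]
    · rintro y hy
      exact ⟨hy.1, fun hyB => hBD y hyB hy.2⟩
    · rw [Set.disjoint_left]
      rintro y hy hy'
      exact hy'.2 (hDQ hy.2)
    · rw [Set.disjoint_left]
      rintro y (hy | hy) hy'
      · exact hy'.2 ⟨hy'.1.1, hy.2⟩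
      · exact hy.2 (hPQ hy'.1.1)
  · rintro a haI
    have ⟨ha1, ha2⟩ := haI
    have ha : 0 < a := by linarith
    obtain ⟨D1, hD1, hb1⟩ := far hα0 hm1 hf1 (a := a) (r := a / 2) (by positivity)
      (fun y hy => hnearD a haI y hy.2)
    obtain ⟨D2, hD2, hb2⟩ := far hα0 hm2 hf2 (a := a) (r := a / 2) (by positivity)
      (fun y hy => hnearD a haI y hy.2)
    obtain ⟨D3, hD3, hb3⟩ := far hα0 hm3 hf3 (a := a) (r := M / 2) (by positivity)
      (fun y hy => hfarQ a haI y hy.2)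
    obtain ⟨E, hE, hbE⟩ := VP_deriv (β := β) hα0 hM ha ha2 hT hTM
    have hmain := main_integral (α := α) (β := β) hα0 hM ha ha2 rfl
    have hV : HasDerivAt V _ a := (hD1.add hD3).add (hE.sub hD2)
    rw [hV.deriv]
    refine ⟨hV.hasDerivWithinAt, ?_⟩
    rw [far_const ha] at hb1 hb2
    rw [far_const hM] at hb3
    have p1 : 1 / M ^ α = M ^ (-α) := by rw [rpow_neg hM.le, one_div]
    have p2 : δ ^ 2 / a ^ (2 + α) = δ ^ 2 * a ^ (-(2 + α)) := by rw [rpow_neg ha.le, div_eq_mul_inv]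
    have p3 : M ^ (-(2 + α)) * M ^ 2 = M ^ (-α) := by
      rw [← rpow_two, ← rpow_add hM]; congr 1; ring
    have qa := rpow_pos_of_pos ha (-(2 + α))
    have qM := rpow_pos_of_pos hM (-(2 + α))
    have qM' := rpow_pos_of_pos hM (-α)
    rw [p1, p2]
    have g1 : |D1| ≤ 4 * ((3 + α) * 4 ^ (2 + α)) * (δ ^ 2 * a ^ (-(2 + α))) :=
      hb1.trans ((mul_le_mul_of_nonneg_left hv1 (by positivity)).trans_eq (by ring))
    have g2 : |D2| ≤ 4 * ((3 + α) * 4 ^ (2 + α)) * (δ ^ 2 * a ^ (-(2 + α))) :=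
      hb2.trans ((mul_le_mul_of_nonneg_left hv2 (by positivity)).trans_eq (by ring))
    have g3 : |D3| ≤ 100 * ((3 + α) * 4 ^ (2 + α)) * M ^ (-α) := by
      refine hb3.trans ((mul_le_mul_of_nonneg_left hv3 (by positivity)).trans_eq ?_)
      rw [← p3]; ring
    have hK : 0 < (3 + α) * 4 ^ (2 + α) := by positivity
    have hL : 0 < 2 ^ (1 + α) / α := by positivity
    have hx : 0 < δ ^ 2 * a ^ (-(2 + α)) := by positivity
    exact final_arith hK hL c2 hx qM' g1 g2 g3 hbE hmain
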